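/- Let K be a field of characteristic 0, let f and g be nonconstant, relatively prime polynomials in K[t], set A = f² − g², B = 2fg, C = f² + g², and let w ∈ K[t] be nonzero. If (x, y, z) is a solution in positive integers of (wA)^x + (wB)^y = (wC)^z with x = y = 2, or with x = z = 2, or with y = z = 2, then (x, y, z) = (2, 2, 2). -/

import Mathlib

/-!
Since `A ^ 2 + B ^ 2 = C ^ 2`, as soon as two of the exponents equal `2` the equation cancels down
to `p ^ n = p ^ 2`, where `p` is one of `w * A`, `w * B`, `w * C`. Powers of a nonzero nonunit are
distinct, so it suffices that none of `A`, `B`, `C` is a unit. Over a domain in which `2 ≠ 0`, if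
`A = (f + g) * (f - g)` is a unit then so are both factors, which makes `f` and `g` constant, and
`C` reduces to this case after adjoining a square root of `-1` to the coefficients.
-/

open Polynomial

lemma eq_two_of_sq_add_sq_of_pow_add_pow {R : Type*} [CommRing R] [IsDomain R] {a b c : R}
    (ha : a ≠ 0) (hb : b ≠ 0) (hc : c ≠ 0)
    (ha' : ¬IsUnit a) (hb' : ¬IsUnit b) (hc' : ¬IsUnit c)
    (hsq : a ^ 2 + b ^ 2 = c ^ 2) {x y z : ℕ} (hpow : a ^ x + b ^ y = c ^ z)
    (htwo : (x = 2 ∧ y = 2) ∨ (x = 2 ∧ z = 2) ∨ (y = 2 ∧ z = 2)) :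
    x = 2 ∧ y = 2 ∧ z = 2 := by
  rcases htwo with ⟨rfl, rfl⟩ | ⟨rfl, rfl⟩ | ⟨rfl, rfl⟩
  · exact ⟨rfl, rfl, pow_injective_of_not_isUnit hc' hc (hpow.symm.trans hsq)⟩
  · exact ⟨rfl, pow_injective_of_not_isUnit hb' hb (add_left_cancel (hpow.trans hsq.symm)), rfl⟩
  · exact ⟨pow_injective_of_not_isUnit ha' ha (add_right_cancel (hpow.trans hsq.symm)), rfl, rfl⟩

lemma add_ne_zero_of_isCoprime {R : Type*} [CommRing R] {a b : R} (hab : IsCoprime a b)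
    (ha : ¬IsUnit a) : a + b ≠ 0 := fun h ↦
  ha <| hab.isUnit_of_dvd <| (dvd_add_right dvd_rfl).mp <| h ▸ dvd_zero a

section ConstantFactors

variable {R : Type*} [CommRing R] [IsDomain R]

lemma natDegree_eq_zero_of_isUnit_sq_sub_sq (h2 : (2 : R) ≠ 0) {f g : R[X]}
    (h : IsUnit (f ^ 2 - g ^ 2)) : f.natDegree = 0 ∧ g.natDegree = 0 := by
  rw [sq_sub_sq, IsUnit.mul_iff] at h
  have hadd : (f + g).natDegree = 0 := natDegree_eq_zero_of_isUnit h.1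
  have hsub : (f - g).natDegree = 0 := natDegree_eq_zero_of_isUnit h.2
  constructor
  · have hf : C 2 * f = (f + g) + (f - g) := by rw [C_ofNat]; ring
    rw [← natDegree_C_mul h2, hf]
    exact Nat.le_zero.mp (natDegree_add_le_of_degree_le hadd.le hsub.le)
  · have hg : C 2 * g = (f + g) - (f - g) := by rw [C_ofNat]; ring
    rw [← natDegree_C_mul h2, hg]
    exact Nat.le_zero.mp (natDegree_sub_le_of_le hadd.le hsub.le)

lemma natDegree_eq_zero_of_isUnit_sq_sub_C_mul_sq (h2 : (2 : R) ≠ 0) {c : R} (hc : c ≠ 0)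
    {f g : R[X]} (h : IsUnit (f ^ 2 - C c * g ^ 2)) : f.natDegree = 0 ∧ g.natDegree = 0 := by
  let F := FractionRing R
  let φ : R →+* AlgebraicClosure F := (algebraMap F (AlgebraicClosure F)).comp (algebraMap R F)
  have hφ : Function.Injective φ :=
    (algebraMap F (AlgebraicClosure F)).injective.comp (IsFractionRing.injective R F)
  obtain ⟨s, hs⟩ := IsAlgClosed.exists_eq_mul_self (φ c)
  have hs0 : s ≠ 0 := by
    rintro rfl
    exact hc ((map_eq_zero_iff φ hφ).mp (by rw [hs, mul_zero]))
  have h2φ : (2 : AlgebraicClosure F) ≠ 0 := by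
    rw [← map_ofNat φ 2]
    exact (map_ne_zero_iff φ hφ).mpr h2
  have hmap : (f ^ 2 - C c * g ^ 2).map φ = f.map φ ^ 2 - (C s * g.map φ) ^ 2 := by
    rw [Polynomial.map_sub, Polynomial.map_mul, Polynomial.map_pow, Polynomial.map_pow, map_C, hs,
      C_mul]
    ring
  have hunit : IsUnit (f.map φ ^ 2 - (C s * g.map φ) ^ 2) := hmap ▸ h.map (mapRingHom φ)
  simpa only [natDegree_C_mul hs0, natDegree_map_eq_of_injective hφ] using
    natDegree_eq_zero_of_isUnit_sq_sub_sq h2φ hunit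

lemma natDegree_eq_zero_of_isUnit_sq_add_sq (h2 : (2 : R) ≠ 0) {f g : R[X]}
    (h : IsUnit (f ^ 2 + g ^ 2)) : f.natDegree = 0 ∧ g.natDegree = 0 :=
  natDegree_eq_zero_of_isUnit_sq_sub_C_mul_sq h2 (neg_ne_zero.mpr one_ne_zero) (by simpa using h)

end ConstantFactors

theorem jesmanowicz_poly_two_are_two_general
    {R : Type*} [CommRing R] [IsDomain R] (h2R : (2 : R) ≠ 0)
    (f g w : R[X]) (hfg : 0 < (f * g).natDegree)
    (hA : f ^ 2 - g ^ 2 ≠ 0) (hC : f ^ 2 + g ^ 2 ≠ 0) (hw : w ≠ 0)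
    (x y z : ℕ)
    (heq : (w * (f ^ 2 - g ^ 2)) ^ x + (w * (2 * f * g)) ^ y = (w * (f ^ 2 + g ^ 2)) ^ z)
    (h2 : (x = 2 ∧ y = 2) ∨ (x = 2 ∧ z = 2) ∨ (y = 2 ∧ z = 2)) :
    x = 2 ∧ y = 2 ∧ z = 2 := by
  have hB : 2 * f * g ≠ 0 := by
    rw [mul_assoc, ← C_ofNat]
    exact mul_ne_zero (C_ne_zero.mpr h2R) (ne_zero_of_natDegree_gt hfg)
  have not_const : ¬(f.natDegree = 0 ∧ g.natDegree = 0) := fun ⟨hf, hg⟩ ↦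
    hfg.not_ge (natDegree_mul_le.trans_eq (by rw [hf, hg]))
  have hA' : ¬IsUnit (f ^ 2 - g ^ 2) := mt (natDegree_eq_zero_of_isUnit_sq_sub_sq h2R) not_const
  have hC' : ¬IsUnit (f ^ 2 + g ^ 2) := mt (natDegree_eq_zero_of_isUnit_sq_add_sq h2R) not_const
  have hB' : ¬IsUnit (2 * f * g) := fun h ↦
    hfg.ne' <| natDegree_eq_zero_of_isUnit <| isUnit_of_mul_isUnit_right <| mul_assoc 2 f g ▸ h
  have hsq : (w * (f ^ 2 - g ^ 2)) ^ 2 + (w * (2 * f * g)) ^ 2 = (w * (f ^ 2 + g ^ 2)) ^ 2 := by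
    ring
  exact eq_two_of_sq_add_sq_of_pow_add_pow (mul_ne_zero hw hA) (mul_ne_zero hw hB)
    (mul_ne_zero hw hC) (mt isUnit_of_mul_isUnit_right hA') (mt isUnit_of_mul_isUnit_right hB')
    (mt isUnit_of_mul_isUnit_right hC') hsq heq h2

theorem jesmanowicz_poly_two_are_two
    {K : Type*} [Field K] [CharZero K]
    (f g w : K[X])
    (hf : 0 < f.natDegree) (hg : 0 < g.natDegree)
    (hfg : IsCoprime f g) (hw : w ≠ 0)
    (x y z : ℕ) (hx : 0 < x) (hy : 0 < y) (hz : 0 < z)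
    (heq : (w * (f ^ 2 - g ^ 2)) ^ x + (w * (2 * f * g)) ^ y = (w * (f ^ 2 + g ^ 2)) ^ z)
    (h2 : (x = 2 ∧ y = 2) ∨ (x = 2 ∧ z = 2) ∨ (y = 2 ∧ z = 2)) :
    x = 2 ∧ y = 2 ∧ z = 2 := by
  have hfg_pos : 0 < (f * g).natDegree := by
    rw [natDegree_mul (ne_zero_of_natDegree_gt hf) (ne_zero_of_natDegree_gt hg)]
    exact Nat.add_pos_left hf _
  have hf_sq : ¬IsUnit (f ^ 2) :=
    mt (isUnit_pow_iff two_ne_zero).mp (not_isUnit_of_natDegree_pos f hf)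
  have hA : f ^ 2 - g ^ 2 ≠ 0 :=
    sub_eq_add_neg (f ^ 2) _ ▸ add_ne_zero_of_isCoprime hfg.pow.neg_right hf_sq
  have hC : f ^ 2 + g ^ 2 ≠ 0 := add_ne_zero_of_isCoprime hfg.pow hf_sq
  exact jesmanowicz_poly_two_are_two_general two_ne_zero f g w hfg_pos hA hC hw x y z heq h2
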